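/- For matrix-valued functions A_x, A_y, A_t, Φ on ℝ³, the three Bogomolny equations −∇_tΦ = [∇_x,∇_y], ∇_xΦ = [∇_y,∇_t], ∇_yΦ = [∇_t,∇_x] hold if and only if for every λ ∈ ℂ∖{0}, the operators L_λ = ∇_{z̄} + (iλ/2)∇_t − (λ/2)Φ and M_λ = ∇_z − (i/(2λ))∇_t − (1/(2λ))Φ commute, where ∇_z = ½(∇_x − i∇_y) and ∇_{z̄} = ½(∇_x + i∇_y). -/

import Mathlib

/-!
Multiplication by `Φ` is the covariant derivative with connection coefficient `Φ` in the direction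
`0`, and `∇_vΦ = [∇_v, Φ]` is then its curvature with `∇_v`. So `L_λ` and `M_λ` are linear
combinations of four covariant derivatives, and their commutator is multiplication by a linear
combination of curvatures, which turns out to be one quarter of
`λ (Y - iZ) - 2i X - λ⁻¹ (Y + iZ)` with
`X = [∇_x, ∇_y] + ∇_tΦ`, `Y = ∇_xΦ - [∇_y, ∇_t]`, `Z = ∇_yΦ - [∇_t, ∇_x]`.
Testing on the constant function `1`, the operators commute for every `λ ≠ 0` exactly when this
Laurent polynomial vanishes, that is, when `X = Y = Z = 0`.
-/

attribute [local instance] Matrix.normedAddCommGroup Matrix.normedSpace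

/-- Partial derivative on ℝ³ (coordinates (x,y,t)) in direction `v`. -/
noncomputable def pderiv {N : ℕ} (v : ℝ × ℝ × ℝ)
    (f : ℝ × ℝ × ℝ → Matrix (Fin N) (Fin N) ℂ) :
    ℝ × ℝ × ℝ → Matrix (Fin N) (Fin N) ℂ :=
  fun p => fderiv ℝ f p v

/-- The covariant derivative `∇_v f = ∂_v f + A·f` for a connection coefficient `A`. -/
noncomputable def covDeriv {N : ℕ} (v : ℝ × ℝ × ℝ)
    (A f : ℝ × ℝ × ℝ → Matrix (Fin N) (Fin N) ℂ) :
    ℝ × ℝ × ℝ → Matrix (Fin N) (Fin N) ℂ :=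
  fun p => pderiv v f p + A p * f p

/-- The Lax operator `L_λ = ∇_{z̄} + (iλ/2)∇_t − (λ/2)Φ`,
with `∇_{z̄} = ½(∇_x + i∇_y)`. -/
noncomputable def Lop {N : ℕ} (lam : ℂ)
    (Ax Ay At Φ f : ℝ × ℝ × ℝ → Matrix (Fin N) (Fin N) ℂ) :
    ℝ × ℝ × ℝ → Matrix (Fin N) (Fin N) ℂ :=
  fun p => (2 : ℂ)⁻¹ • (covDeriv (1,0,0) Ax f p + Complex.I • covDeriv (0,1,0) Ay f p)
    + ((Complex.I * lam) / 2) • covDeriv (0,0,1) At f p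
    - (lam / 2) • (Φ p * f p)

/-- The Lax operator `M_λ = ∇_z − (i/(2λ))∇_t − (1/(2λ))Φ`,
with `∇_z = ½(∇_x − i∇_y)`. -/
noncomputable def Mop {N : ℕ} (lam : ℂ)
    (Ax Ay At Φ f : ℝ × ℝ × ℝ → Matrix (Fin N) (Fin N) ℂ) :
    ℝ × ℝ × ℝ → Matrix (Fin N) (Fin N) ℂ :=
  fun p => (2 : ℂ)⁻¹ • (covDeriv (1,0,0) Ax f p - Complex.I • covDeriv (0,1,0) Ay f p)
    - (Complex.I / (2 * lam)) • covDeriv (0,0,1) At f p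
    - (1 / (2 * lam)) • (Φ p * f p)

section Calculus

variable {𝕜 E F : Type*} [NormedAddCommGroup E] [NormedAddCommGroup F]

section SecondDerivative

variable [RCLike 𝕜] [NormedSpace 𝕜 E] [NormedSpace 𝕜 F] {f : E → F} {p : E}

lemma differentiableAt_fderiv_apply (hf : ContDiffAt 𝕜 2 f p) (v : E) :
    DifferentiableAt 𝕜 (fun q => fderiv 𝕜 f q v) p :=
  ((hf.fderiv_right (m := 1) (by norm_num)).differentiableAt (by norm_num)).clm_apply
    (differentiableAt_const v)

lemma fderiv_fderiv_apply_comm (hf : ContDiffAt 𝕜 2 f p) (v w : E) :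
    fderiv 𝕜 (fun q => fderiv 𝕜 f q w) p v = fderiv 𝕜 (fun q => fderiv 𝕜 f q v) p w := by
  have hf' : DifferentiableAt 𝕜 (fderiv 𝕜 f) p :=
    (hf.fderiv_right (m := 1) (by norm_num)).differentiableAt (by norm_num)
  have second_derivative (a b : E) :
      fderiv 𝕜 (fun q => fderiv 𝕜 f q b) p a = fderiv 𝕜 (fderiv 𝕜 f) p a b := by
    simp [fderiv_clm_apply hf' (differentiableAt_const b)]
  rw [second_derivative, second_derivative]
  exact hf.isSymmSndFDerivAt (by simp) v w

end SecondDerivative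

lemma fderiv_sum_smul_apply {ι R : Type*} [Fintype ι] [NontriviallyNormedField 𝕜]
    [NormedSpace 𝕜 E] [NormedSpace 𝕜 F] [Semiring R] [Module R F] [SMulCommClass 𝕜 R F]
    [ContinuousConstSMul R F] (c : ι → R) {g : ι → E → F} {p : E}
    (hg : ∀ i, DifferentiableAt 𝕜 (g i) p) (v : E) :
    fderiv 𝕜 (fun q => ∑ i, c i • g i q) p v = ∑ i, c i • fderiv 𝕜 (g i) p v := by
  rw [fderiv_fun_sum fun i _ => (hg i).fun_const_smul (c i)]
  simp [fderiv_fun_const_smul (hg _)]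

section MatrixProduct

/- Differentiability and `fderiv` depend on the norm only through its topology, so the product rule
may be proved with the submultiplicative `ℓ∞`-operator norm in place of the sup norm. -/

variable {n 𝔸 : Type*} [Fintype n] [NontriviallyNormedField 𝕜] [NormedRing 𝔸] [NormedAlgebra 𝕜 𝔸]
  [NormedSpace 𝕜 E] {f g : E → Matrix n n 𝔸} {p : E}

lemma differentiableAt_matrix_mul (hf : DifferentiableAt 𝕜 f p) (hg : DifferentiableAt 𝕜 g p) :
    DifferentiableAt 𝕜 (fun q => f q * g q) p := by
  classical
  let := Matrix.linftyOpNormedRing (n := n) (α := 𝔸)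
  let := Matrix.linftyOpNormedAlgebra (n := n) (R := 𝕜) (α := 𝔸)
  exact DifferentiableAt.mul (𝔸 := Matrix n n 𝔸) hf hg

lemma fderiv_matrix_mul_apply (hf : DifferentiableAt 𝕜 f p) (hg : DifferentiableAt 𝕜 g p) (v : E) :
    fderiv 𝕜 (fun q => f q * g q) p v = fderiv 𝕜 f p v * g p + f p * fderiv 𝕜 g p v := by
  classical
  let := Matrix.linftyOpNormedRing (n := n) (α := 𝔸)
  let := Matrix.linftyOpNormedAlgebra (n := n) (R := 𝕜) (α := 𝔸)
  exact (congrArg (· v) (fderiv_fun_mul' (𝔸 := Matrix n n 𝔸) hf hg)).trans (add_comm _ _)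

end MatrixProduct

end Calculus

lemma laurent_eq_zero_iff {K E : Type*} [Field K] [CharZero K] [AddCommGroup E] [Module K E]
    {a b c : E} :
    (∀ l : K, l ≠ 0 → l • a + b + l⁻¹ • c = 0) ↔ a = 0 ∧ b = 0 ∧ c = 0 := by
  refine ⟨fun h => ?_, by rintro ⟨rfl, rfl, rfl⟩; simp⟩
  have at_one := h 1 one_ne_zero
  have at_neg_one := h (-1) (neg_ne_zero.mpr one_ne_zero)
  have at_two := h 2 two_ne_zero
  refine ⟨?_, ?_, ?_⟩
  · linear_combination (norm := module)
      (2 / 3 : K) • at_two - (1 / 2 : K) • at_one - (1 / 6 : K) • at_neg_one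
  · linear_combination (norm := module) (1 / 2 : K) • at_one + (1 / 2 : K) • at_neg_one
  · linear_combination (norm := module)
      at_one - (1 / 3 : K) • at_neg_one - (2 / 3 : K) • at_two

lemma lax_laurent_eq_zero_iff {E : Type*} [AddCommGroup E] [Module ℂ E] {X Y Z : E} :
    (∀ l : ℂ, l ≠ 0 → (1 / 4 : ℂ) •
      (l • (Y - Complex.I • Z) + (-2 * Complex.I) • X + l⁻¹ • (-Y - Complex.I • Z)) = 0) ↔
      X = 0 ∧ Y = 0 ∧ Z = 0 := by
  have quarter_ne_zero : (1 / 4 : ℂ) ≠ 0 := by norm_num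
  have two_I_ne_zero : -2 * Complex.I ≠ 0 := by simp
  simp only [smul_eq_zero_iff_right quarter_ne_zero, laurent_eq_zero_iff,
    smul_eq_zero_iff_right two_I_ne_zero]
  refine ⟨fun ⟨h_pos, hX, h_neg⟩ => ⟨hX, ?_, ?_⟩, by rintro ⟨rfl, rfl, rfl⟩; simp⟩
  · linear_combination (norm := module) (1 / 2 : ℂ) • h_pos - (1 / 2 : ℂ) • h_neg
  · refine (smul_eq_zero_iff_right two_I_ne_zero).mp ?_
    linear_combination (norm := module) h_pos + h_neg

section CovariantDerivative

variable {N : ℕ} {v w : ℝ × ℝ × ℝ} {A B f : ℝ × ℝ × ℝ → Matrix (Fin N) (Fin N) ℂ} {p : ℝ × ℝ × ℝ}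

/-- The curvature `[∂_v + A, ∂_w + B] = ∂_v B - ∂_w A + [A, B]` of a pair of covariant derivatives,
as a matrix-valued function. -/
noncomputable def curvature (v w : ℝ × ℝ × ℝ) (A B : ℝ × ℝ × ℝ → Matrix (Fin N) (Fin N) ℂ) :
    ℝ × ℝ × ℝ → Matrix (Fin N) (Fin N) ℂ :=
  fun p => pderiv v B p - pderiv w A p + (A p * B p - B p * A p)

lemma curvature_self (v : ℝ × ℝ × ℝ) (A : ℝ × ℝ × ℝ → Matrix (Fin N) (Fin N) ℂ)
    (p : ℝ × ℝ × ℝ) : curvature v v A A p = 0 := by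
  simp [curvature]

lemma curvature_swap (v w : ℝ × ℝ × ℝ) (A B : ℝ × ℝ × ℝ → Matrix (Fin N) (Fin N) ℂ)
    (p : ℝ × ℝ × ℝ) : curvature w v B A p = -curvature v w A B p := by
  simp only [curvature]
  abel

lemma curvature_zero_right (v : ℝ × ℝ × ℝ) (A B : ℝ × ℝ × ℝ → Matrix (Fin N) (Fin N) ℂ)
    (p : ℝ × ℝ × ℝ) :
    curvature v 0 A B p = pderiv v B p + (A p * B p - B p * A p) := by
  simp [curvature, pderiv]

lemma covDeriv_zero (A f : ℝ × ℝ × ℝ → Matrix (Fin N) (Fin N) ℂ) (p : ℝ × ℝ × ℝ) :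
    covDeriv 0 A f p = A p * f p := by
  simp [covDeriv, pderiv]

lemma differentiableAt_covDeriv (hA : DifferentiableAt ℝ A p) (hf : ContDiffAt ℝ 2 f p) :
    DifferentiableAt ℝ (covDeriv v A f) p :=
  (differentiableAt_fderiv_apply hf v).add
    (differentiableAt_matrix_mul hA (hf.differentiableAt two_ne_zero))

lemma covDeriv_covDeriv (hB : DifferentiableAt ℝ B p) (hf : ContDiffAt ℝ 2 f p) :
    covDeriv v A (covDeriv w B f) p =
      pderiv v (pderiv w f) p + (pderiv v B p * f p + B p * pderiv v f p)
        + A p * (pderiv w f p + B p * f p) := by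
  have hf' := hf.differentiableAt two_ne_zero
  have leibniz : pderiv v (covDeriv w B f) p =
      pderiv v (pderiv w f) p + (pderiv v B p * f p + B p * pderiv v f p) :=
    calc
      _ = pderiv v (pderiv w f) p + pderiv v (fun q => B q * f q) p :=
        congrArg (· v) (fderiv_fun_add (differentiableAt_fderiv_apply hf w)
          (differentiableAt_matrix_mul hB hf'))
      _ = _ := by rw [pderiv, pderiv, fderiv_matrix_mul_apply hB hf', pderiv, pderiv]
  rw [covDeriv, leibniz, covDeriv]

lemma covDeriv_commutator (hA : DifferentiableAt ℝ A p) (hB : DifferentiableAt ℝ B p)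
    (hf : ContDiffAt ℝ 2 f p) :
    covDeriv v A (covDeriv w B f) p - covDeriv w B (covDeriv v A f) p =
      curvature v w A B p * f p := by
  have mixed_partials : pderiv v (pderiv w f) p = pderiv w (pderiv v f) p :=
    fderiv_fderiv_apply_comm hf v w
  rw [covDeriv_covDeriv hB hf, covDeriv_covDeriv hA hf, mixed_partials, curvature]
  noncomm_ring

lemma covDeriv_sum_smul {ι : Type*} [Fintype ι] (c : ι → ℂ)
    {g : ι → ℝ × ℝ × ℝ → Matrix (Fin N) (Fin N) ℂ} (hg : ∀ i, DifferentiableAt ℝ (g i) p) :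
    covDeriv v A (fun q => ∑ i, c i • g i q) p = ∑ i, c i • covDeriv v A (g i) p := by
  have deriv_sum : pderiv v (fun q => ∑ i, c i • g i q) p = ∑ i, c i • pderiv v (g i) p :=
    fderiv_sum_smul_apply c hg v
  simp only [covDeriv, deriv_sum, Finset.mul_sum, mul_smul_comm, smul_add, Finset.sum_add_distrib]

end CovariantDerivative

section Combination

variable {N : ℕ} {ι : Type*} [Fintype ι]

/-- The first-order operator `∑ i, c i ∇_i`, where `∇_i = ∂_{v i} + A i`. -/
noncomputable def covDerivComb (v : ι → ℝ × ℝ × ℝ)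
    (A : ι → ℝ × ℝ × ℝ → Matrix (Fin N) (Fin N) ℂ) (c : ι → ℂ)
    (f : ℝ × ℝ × ℝ → Matrix (Fin N) (Fin N) ℂ) : ℝ × ℝ × ℝ → Matrix (Fin N) (Fin N) ℂ :=
  fun p => ∑ i, c i • covDeriv (v i) (A i) f p

variable {v : ι → ℝ × ℝ × ℝ} {A : ι → ℝ × ℝ × ℝ → Matrix (Fin N) (Fin N) ℂ}
  {f : ℝ × ℝ × ℝ → Matrix (Fin N) (Fin N) ℂ} {p : ℝ × ℝ × ℝ}

lemma covDerivComb_covDerivComb (hA : ∀ i, DifferentiableAt ℝ (A i) p)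
    (hf : ContDiffAt ℝ 2 f p) (c d : ι → ℂ) :
    covDerivComb v A c (covDerivComb v A d f) p =
      ∑ i, ∑ j, (c i * d j) • covDeriv (v i) (A i) (covDeriv (v j) (A j) f) p := by
  have expand (i : ι) : covDeriv (v i) (A i) (covDerivComb v A d f) p =
      ∑ j, d j • covDeriv (v i) (A i) (covDeriv (v j) (A j) f) p :=
    covDeriv_sum_smul d fun j => differentiableAt_covDeriv (hA j) hf
  rw [covDerivComb]
  simp only [expand, Finset.smul_sum, smul_smul]

lemma covDerivComb_commutator (hA : ∀ i, DifferentiableAt ℝ (A i) p)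
    (hf : ContDiffAt ℝ 2 f p) (c d : ι → ℂ) :
    covDerivComb v A c (covDerivComb v A d f) p - covDerivComb v A d (covDerivComb v A c f) p =
      (∑ i, ∑ j, (c i * d j) • curvature (v i) (v j) (A i) (A j) p) * f p := by
  rw [covDerivComb_covDerivComb hA hf, covDerivComb_covDerivComb hA hf,
    Finset.sum_comm (f := fun i j => (d i * c j) • _)]
  simp only [← Finset.sum_sub_distrib, Finset.sum_mul, smul_mul_assoc, mul_comm (d _) (c _),
    ← smul_sub, covDeriv_commutator (hA _) (hA _) hf]

end Combination

section LaxPair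

variable {N : ℕ} (lam : ℂ) (Ax Ay At Φ f : ℝ × ℝ × ℝ → Matrix (Fin N) (Fin N) ℂ)

lemma Lop_eq_covDerivComb :
    Lop lam Ax Ay At Φ f = covDerivComb ![(1, 0, 0), (0, 1, 0), (0, 0, 1), 0] ![Ax, Ay, At, Φ]
      ![1 / 2, Complex.I / 2, Complex.I * lam / 2, -(lam / 2)] f := by
  ext1 p
  simp only [Lop, covDerivComb, Fin.sum_univ_four, Matrix.cons_val, covDeriv_zero]
  module

lemma Mop_eq_covDerivComb :
    Mop lam Ax Ay At Φ f = covDerivComb ![(1, 0, 0), (0, 1, 0), (0, 0, 1), 0] ![Ax, Ay, At, Φ]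
      ![1 / 2, -(Complex.I / 2), -(Complex.I / (2 * lam)), -(1 / (2 * lam))] f := by
  ext1 p
  simp only [Mop, covDerivComb, Fin.sum_univ_four, Matrix.cons_val, covDeriv_zero]
  module

/-- The matrix-valued function by which the commutator `[L_λ, M_λ]` multiplies, as a Laurent
polynomial in `λ`. The direction `0` stands for the Higgs field: `curvature v 0 A Φ` is `∇_vΦ`. -/
noncomputable def laxCurvature (p : ℝ × ℝ × ℝ) : Matrix (Fin N) (Fin N) ℂ :=
  let X := curvature (1, 0, 0) (0, 1, 0) Ax Ay p + curvature (0, 0, 1) 0 At Φ p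
  let Y := curvature (1, 0, 0) 0 Ax Φ p - curvature (0, 1, 0) (0, 0, 1) Ay At p
  let Z := curvature (0, 1, 0) 0 Ay Φ p - curvature (0, 0, 1) (1, 0, 0) At Ax p
  (1 / 4 : ℂ) • (lam • (Y - Complex.I • Z) + (-2 * Complex.I) • X + lam⁻¹ • (-Y - Complex.I • Z))

variable {lam Ax Ay At Φ f} {p : ℝ × ℝ × ℝ}

lemma Lop_Mop_commutator (hlam : lam ≠ 0) (hAx : DifferentiableAt ℝ Ax p)
    (hAy : DifferentiableAt ℝ Ay p) (hAt : DifferentiableAt ℝ At p) (hΦ : DifferentiableAt ℝ Φ p)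
    (hf : ContDiffAt ℝ 2 f p) :
    Lop lam Ax Ay At Φ (Mop lam Ax Ay At Φ f) p - Mop lam Ax Ay At Φ (Lop lam Ax Ay At Φ f) p =
      laxCurvature lam Ax Ay At Φ p * f p := by
  have hA : ∀ i, DifferentiableAt ℝ (![Ax, Ay, At, Φ] i) p := by
    simp [Fin.forall_fin_succ, hAx, hAy, hAt, hΦ]
  simp only [Lop_eq_covDerivComb, Mop_eq_covDerivComb]
  rw [covDerivComb_commutator hA hf]
  congr 1
  simp only [Fin.sum_univ_four, Matrix.cons_val, curvature_self,
    curvature_swap (1, 0, 0) (0, 1, 0) Ax Ay, curvature_swap (0, 1, 0) (0, 0, 1) Ay At,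
    curvature_swap (0, 0, 1) (1, 0, 0) At Ax, curvature_swap _ 0 _ Φ, laxCurvature]
  match_scalars <;> grind [Complex.I_sq]

lemma Lop_Mop_comm_iff (hlam : lam ≠ 0) (hAx : Differentiable ℝ Ax) (hAy : Differentiable ℝ Ay)
    (hAt : Differentiable ℝ At) (hΦ : Differentiable ℝ Φ) :
    (∀ f : ℝ × ℝ × ℝ → Matrix (Fin N) (Fin N) ℂ, ContDiff ℝ 2 f → ∀ p,
        Lop lam Ax Ay At Φ (Mop lam Ax Ay At Φ f) p
          = Mop lam Ax Ay At Φ (Lop lam Ax Ay At Φ f) p) ↔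
      ∀ p, laxCurvature lam Ax Ay At Φ p = 0 := by
  have commutator (f) (hf : ContDiff ℝ 2 f) (p) :=
    Lop_Mop_commutator hlam (hAx p) (hAy p) (hAt p) (hΦ p) hf.contDiffAt
  refine ⟨fun comm p => ?_, fun flat f hf p => ?_⟩
  · simpa [comm _ contDiff_const p] using (commutator (fun _ => 1) contDiff_const p).symm
  · rw [← sub_eq_zero, commutator f hf p, flat p, zero_mul]

lemma laxCurvature_eq_zero_iff :
    (∀ lam : ℂ, lam ≠ 0 → laxCurvature lam Ax Ay At Φ p = 0) ↔
      -curvature (0, 0, 1) 0 At Φ p = curvature (1, 0, 0) (0, 1, 0) Ax Ay p ∧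
      curvature (1, 0, 0) 0 Ax Φ p = curvature (0, 1, 0) (0, 0, 1) Ay At p ∧
      curvature (0, 1, 0) 0 Ay Φ p = curvature (0, 0, 1) (1, 0, 0) At Ax p := by
  simp only [laxCurvature, lax_laurent_eq_zero_iff, sub_eq_zero, neg_eq_iff_add_eq_zero,
    add_comm (curvature (0, 0, 1) 0 At Φ p)]

end LaxPair

theorem bogomolny_iff_lax_commute_general {N : ℕ}
    (Ax Ay At Φ : ℝ × ℝ × ℝ → Matrix (Fin N) (Fin N) ℂ)
    (hAx : Differentiable ℝ Ax) (hAy : Differentiable ℝ Ay)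
    (hAt : Differentiable ℝ At) (hΦ : Differentiable ℝ Φ) :
    ((∀ p, -(pderiv (0,0,1) Φ p + (At p * Φ p - Φ p * At p))
          = pderiv (1,0,0) Ay p - pderiv (0,1,0) Ax p + (Ax p * Ay p - Ay p * Ax p)) ∧
      (∀ p, pderiv (1,0,0) Φ p + (Ax p * Φ p - Φ p * Ax p)
          = pderiv (0,1,0) At p - pderiv (0,0,1) Ay p + (Ay p * At p - At p * Ay p)) ∧
      (∀ p, pderiv (0,1,0) Φ p + (Ay p * Φ p - Φ p * Ay p)
          = pderiv (0,0,1) Ax p - pderiv (1,0,0) At p + (At p * Ax p - Ax p * At p)))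
    ↔
    (∀ lam : ℂ, lam ≠ 0 → ∀ f : ℝ × ℝ × ℝ → Matrix (Fin N) (Fin N) ℂ,
      ContDiff ℝ 2 f → ∀ p,
        Lop lam Ax Ay At Φ (Mop lam Ax Ay At Φ f) p
          = Mop lam Ax Ay At Φ (Lop lam Ax Ay At Φ f) p) := by
  symm
  calc
    _ ↔ ∀ lam : ℂ, lam ≠ 0 → ∀ p, laxCurvature lam Ax Ay At Φ p = 0 :=
      forall₂_congr fun _ hlam => Lop_Mop_comm_iff hlam hAx hAy hAt hΦ
    _ ↔ ∀ p, ∀ lam : ℂ, lam ≠ 0 → laxCurvature lam Ax Ay At Φ p = 0 :=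
      ⟨fun h p lam hlam => h lam hlam p, fun h lam hlam p => h p lam hlam⟩
    _ ↔ _ := by
      simp only [laxCurvature_eq_zero_iff, curvature_zero_right, forall_and]
      rfl

/-- The three Bogomolny equations hold iff the Lax operators
`L_λ` and `M_λ` commute for every `λ ∈ ℂ∖{0}`. -/
theorem bogomolny_iff_lax_commute {N : ℕ}
    (Ax Ay At Φ : ℝ × ℝ × ℝ → Matrix (Fin N) (Fin N) ℂ)
    (hAx : ContDiff ℝ (⊤ : ℕ∞) Ax) (hAy : ContDiff ℝ (⊤ : ℕ∞) Ay)
    (hAt : ContDiff ℝ (⊤ : ℕ∞) At) (hΦ : ContDiff ℝ (⊤ : ℕ∞) Φ) :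
    ( -- −∇_tΦ = [∇_x,∇_y]
      (∀ p, -(pderiv (0,0,1) Φ p + (At p * Φ p - Φ p * At p))
          = pderiv (1,0,0) Ay p - pderiv (0,1,0) Ax p + (Ax p * Ay p - Ay p * Ax p)) ∧
      -- ∇_xΦ = [∇_y,∇_t]
      (∀ p, pderiv (1,0,0) Φ p + (Ax p * Φ p - Φ p * Ax p)
          = pderiv (0,1,0) At p - pderiv (0,0,1) Ay p + (Ay p * At p - At p * Ay p)) ∧
      -- ∇_yΦ = [∇_t,∇_x]
      (∀ p, pderiv (0,1,0) Φ p + (Ay p * Φ p - Φ p * Ay p)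
          = pderiv (0,0,1) Ax p - pderiv (1,0,0) At p + (At p * Ax p - Ax p * At p)) )
    ↔
    (∀ lam : ℂ, lam ≠ 0 → ∀ f : ℝ × ℝ × ℝ → Matrix (Fin N) (Fin N) ℂ,
      ContDiff ℝ 2 f → ∀ p,
        Lop lam Ax Ay At Φ (Mop lam Ax Ay At Φ f) p
          = Mop lam Ax Ay At Φ (Lop lam Ax Ay At Φ f) p) :=
  bogomolny_iff_lax_commute_general Ax Ay At Φ (hAx.differentiable (by simp))
    (hAy.differentiable (by simp)) (hAt.differentiable (by simp)) (hΦ.differentiable (by simp))
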